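/- (Key identity in the proof of Lemma 3.5) For every integer ν ∈ ℤ and all natural numbers t, λ ∈ ℕ, the following identity holds in ℚ(v): [ν−t ∣ λ] · [ν ∣ t] = Σ_{j=0}^{λ} Σ_{c=0}^{min(t,j)} v^{ν(λ−j−c) + 2jt} · [−t ∣ λ−j] · [ν ∣ t+j−c] · [t+j−c ; c, t−c, j−c]. -/

import Mathlib

open Finset

noncomputable section

/-- The field `ℚ(v)` of rational functions over `ℚ`. -/
abbrev K : Type := RatFunc ℚ

/-- The indeterminate `v`. -/
def v : K := RatFunc.X

/-- `[i] = (v^i - v^{-i})/(v - v^{-1})`. -/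
def qint (i : ℤ) : K := (v ^ i - v ^ (-i)) / (v - v⁻¹)

/-- `[t]! = [1][2]⋯[t]`. -/
def qfact (t : ℕ) : K := ∏ s ∈ Finset.range t, qint (s + 1)

/-- The Gaussian binomial coefficient `[N ∣ t] = ([N][N-1]⋯[N-t+1])/[t]!`. -/
def qbinom (N : ℤ) (t : ℕ) : K := (∏ s ∈ Finset.range t, qint (N - s)) / qfact t

/-- The q-trinomial coefficient `[a+b+c ; a, b, c] = [a+b+c]!/([a]![b]![c]!)`. -/
def qtri (a b c : ℕ) : K := qfact (a + b + c) / (qfact a * qfact b * qfact c)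

/-!
Write `⟦N ∣ k⟧` for the Gaussian binomial at a nonzero `q` that is not a root of unity. The identity
combines two applications of the `q`-Vandermonde convolution
`⟦m + n ∣ k⟧ = ∑_{i + j = k} q^{mj - ni} ⟦m ∣ i⟧ ⟦n ∣ j⟧`. Splitting `N = t + (N - t)` in `⟦N ∣ j⟧`
and multiplying by `⟦N ∣ t⟧` merges `⟦N ∣ t⟧ ⟦N - t ∣ j - c⟧` into a multiple of
`⟦N ∣ t + j - c⟧`, and the factorials left over form a trinomial coefficient; this expands the
product `⟦N ∣ j⟧ ⟦N ∣ t⟧`. Splitting `⟦N + m ∣ l⟧` and expanding each `⟦N ∣ j⟧ ⟦N ∣ t⟧` in this way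
gives the identity for any integer `m` in place of `-t`.
-/

variable {F : Type*} [Field F] {q : F}

/-- The quantum integer `(q^i - q^{-i}) / (q - q⁻¹)` over an arbitrary field; `qint` is the case
`q = v`. Division by zero makes it vanish identically when `q = 0` or `q ^ 2 = 1`. -/
def quantumInt (q : F) (i : ℤ) : F := (q ^ i - q ^ (-i)) / (q - q⁻¹)

/-- The quantum factorial over an arbitrary field; `qfact` is the case `q = v`. -/
def quantumFactorial (q : F) (n : ℕ) : F := ∏ s ∈ range n, quantumInt q (s + 1)

/-- The Gaussian binomial coefficient over an arbitrary field, with integer upper entry as in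
`Ring.choose`; `qbinom` is the case `q = v`. -/
def quantumBinom (q : F) (N : ℤ) (k : ℕ) : F :=
  (∏ s ∈ range k, quantumInt q (N - s)) / quantumFactorial q k

/-- The `q`-trinomial coefficient `[a + b + c ; a, b, c]` over an arbitrary field; `qtri` is the
case `q = v`. -/
def quantumTrinom (q : F) (a b c : ℕ) : F :=
  quantumFactorial q (a + b + c) / (quantumFactorial q a * quantumFactorial q b *
    quantumFactorial q c)

theorem quantumInt_zero : quantumInt q 0 = 0 := by
  simp [quantumInt]

theorem quantumInt_add (hq₀ : q ≠ 0) (a b : ℤ) :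
    quantumInt q (a + b) = q ^ (-b) * quantumInt q a + q ^ a * quantumInt q b := by
  simp only [quantumInt, neg_add, zpow_add₀ hq₀]
  ring

theorem zpow_sub_zpow_neg_ne_zero (hq₀ : q ≠ 0) (hq : ¬IsOfFinOrder q) {n : ℕ} (hn : n ≠ 0) :
    q ^ (n : ℤ) - q ^ (-(n : ℤ)) ≠ 0 := by
  intro h
  refine hq (isOfFinOrder_iff_pow_eq_one.mpr ⟨n + n, by omega, ?_⟩)
  rw [zpow_neg, zpow_natCast, sub_eq_zero] at h
  nth_rewrite 1 [pow_add, h]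
  exact inv_mul_cancel₀ (pow_ne_zero n hq₀)

theorem quantumInt_natCast_ne_zero (hq₀ : q ≠ 0) (hq : ¬IsOfFinOrder q) {n : ℕ} (hn : n ≠ 0) :
    quantumInt q n ≠ 0 := by
  have hden : q - q⁻¹ ≠ 0 := by
    simpa using zpow_sub_zpow_neg_ne_zero hq₀ hq one_ne_zero
  exact div_ne_zero (zpow_sub_zpow_neg_ne_zero hq₀ hq hn) hden

theorem quantumInt_natCast_add_one_ne_zero (hq₀ : q ≠ 0) (hq : ¬IsOfFinOrder q) (n : ℕ) :
    quantumInt q (n + 1) ≠ 0 := by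
  exact_mod_cast quantumInt_natCast_ne_zero hq₀ hq n.succ_ne_zero

theorem quantumFactorial_zero : quantumFactorial q 0 = 1 :=
  prod_range_zero _

theorem quantumFactorial_succ (n : ℕ) :
    quantumFactorial q (n + 1) = quantumFactorial q n * quantumInt q (n + 1) :=
  prod_range_succ _ _

theorem quantumFactorial_ne_zero (hq₀ : q ≠ 0) (hq : ¬IsOfFinOrder q) (n : ℕ) :
    quantumFactorial q n ≠ 0 :=
  prod_ne_zero_iff.mpr fun s _ => quantumInt_natCast_add_one_ne_zero hq₀ hq s

theorem quantumBinom_zero_right (N : ℤ) : quantumBinom q N 0 = 1 := by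
  simp [quantumBinom, quantumFactorial_zero]

theorem quantumBinom_mul_quantumFactorial (hq₀ : q ≠ 0) (hq : ¬IsOfFinOrder q) (N : ℤ) (k : ℕ) :
    quantumBinom q N k * quantumFactorial q k = ∏ s ∈ range k, quantumInt q (N - s) :=
  div_mul_cancel₀ _ (quantumFactorial_ne_zero hq₀ hq k)

theorem quantumInt_mul_quantumBinom_succ (hq₀ : q ≠ 0) (hq : ¬IsOfFinOrder q) (N : ℤ) (k : ℕ) :
    quantumInt q (k + 1) * quantumBinom q N (k + 1) =
      quantumInt q N * quantumBinom q (N - 1) k := by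
  have hprod : ∏ s ∈ range (k + 1), quantumInt q (N - s) =
      (∏ s ∈ range k, quantumInt q (N - 1 - s)) * quantumInt q N := by
    rw [prod_range_succ']
    simp [sub_sub, add_comm]
  apply mul_right_cancel₀ (quantumFactorial_ne_zero hq₀ hq k)
  rw [← quantumBinom_mul_quantumFactorial hq₀ hq, ← quantumBinom_mul_quantumFactorial hq₀ hq,
    quantumFactorial_succ] at hprod
  linear_combination hprod

theorem quantumBinom_eq_zero_of_lt {n k : ℕ} (h : n < k) : quantumBinom q n k = 0 := by
  rw [quantumBinom, prod_eq_zero (mem_range.mpr h) (by rw [sub_self, quantumInt_zero]), zero_div]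

theorem quantumBinom_self (hq₀ : q ≠ 0) (hq : ¬IsOfFinOrder q) (n : ℕ) :
    quantumBinom q n n = 1 := by
  induction n with
  | zero => exact quantumBinom_zero_right _
  | succ n ih =>
    apply mul_left_cancel₀ (quantumInt_natCast_add_one_ne_zero hq₀ hq n)
    rw [quantumInt_mul_quantumBinom_succ hq₀ hq, Nat.cast_succ, add_sub_cancel_right, ih]

theorem quantumBinom_mul_quantumBinom_sub (hq₀ : q ≠ 0) (hq : ¬IsOfFinOrder q) (N : ℤ)
    (a b : ℕ) :
    quantumBinom q N a * quantumBinom q (N - a) b *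
        (quantumFactorial q a * quantumFactorial q b) =
      quantumBinom q N (a + b) * quantumFactorial q (a + b) := by
  rw [mul_mul_mul_comm]
  simp only [quantumBinom_mul_quantumFactorial hq₀ hq, prod_range_add, Nat.cast_add, sub_sub]

theorem quantumBinom_add_mul_quantumFactorial (hq₀ : q ≠ 0) (hq : ¬IsOfFinOrder q) (a b : ℕ) :
    quantumBinom q (a + b : ℕ) a * (quantumFactorial q a * quantumFactorial q b) =
      quantumFactorial q (a + b) := by
  have h := quantumBinom_mul_quantumBinom_sub hq₀ hq (a + b : ℕ) a b
  rwa [quantumBinom_self hq₀ hq, Nat.cast_add, add_sub_cancel_left, quantumBinom_self hq₀ hq,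
    mul_one, one_mul, ← Nat.cast_add] at h

theorem quantumBinom_mul_quantumTrinom (hq₀ : q ≠ 0) (hq : ¬IsOfFinOrder q) (N : ℤ)
    (a b c : ℕ) :
    quantumBinom q N (a + b + c) * quantumTrinom q a b c =
      quantumBinom q (a + b : ℕ) a *
        (quantumBinom q N (a + b) * quantumBinom q (N - (a + b : ℕ)) c) := by
  have ha := quantumFactorial_ne_zero hq₀ hq a
  have hb := quantumFactorial_ne_zero hq₀ hq b
  have hc := quantumFactorial_ne_zero hq₀ hq c
  rw [quantumTrinom, ← mul_div_assoc, ← quantumBinom_mul_quantumBinom_sub hq₀ hq,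
    ← quantumBinom_add_mul_quantumFactorial hq₀ hq a b]
  field_simp

/-- The summand indexed by `p = (i, j)` of the `q`-Vandermonde convolution of `⟦m + n ∣ i + j⟧`. -/
def quantumVandermondeTerm (q : F) (m n : ℤ) (p : ℕ × ℕ) : F :=
  q ^ (m * p.2 - n * p.1) * quantumBinom q m p.1 * quantumBinom q n p.2

theorem quantumInt_mul_quantumVandermondeTerm_succ_fst (hq₀ : q ≠ 0) (hq : ¬IsOfFinOrder q)
    (m n : ℤ) (i j : ℕ) :
    q ^ (-(j : ℤ)) * quantumInt q (i + 1) * quantumVandermondeTerm q m n (i + 1, j) =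
      q ^ (-n) * quantumInt q m * quantumVandermondeTerm q (m - 1) n (i, j) := by
  have hexp : q ^ (-(j : ℤ)) * q ^ (m * j - n * (i + 1 : ℕ)) =
      q ^ (-n) * q ^ ((m - 1) * j - n * i) := by
    rw [← zpow_add₀ hq₀, ← zpow_add₀ hq₀]
    congr 1
    push_cast
    ring
  have hrec := quantumInt_mul_quantumBinom_succ hq₀ hq m i
  simp only [quantumVandermondeTerm]
  linear_combination quantumInt q (i + 1) * quantumBinom q m (i + 1) * quantumBinom q n j * hexp +
    q ^ (-n) * q ^ ((m - 1) * j - n * i) * quantumBinom q n j * hrec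

theorem quantumInt_mul_quantumVandermondeTerm_succ_snd (hq₀ : q ≠ 0) (hq : ¬IsOfFinOrder q)
    (m n : ℤ) (i j : ℕ) :
    q ^ (i : ℤ) * quantumInt q (j + 1) * quantumVandermondeTerm q m n (i, j + 1) =
      q ^ m * quantumInt q n * quantumVandermondeTerm q m (n - 1) (i, j) := by
  have hexp : q ^ (i : ℤ) * q ^ (m * (j + 1 : ℕ) - n * i) =
      q ^ m * q ^ (m * j - (n - 1) * i) := by
    rw [← zpow_add₀ hq₀, ← zpow_add₀ hq₀]
    congr 1
    push_cast
    ring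
  have hrec := quantumInt_mul_quantumBinom_succ hq₀ hq n j
  simp only [quantumVandermondeTerm]
  linear_combination quantumInt q (j + 1) * quantumBinom q m i * quantumBinom q n (j + 1) * hexp +
    q ^ m * q ^ (m * j - (n - 1) * i) * quantumBinom q m i * hrec

theorem quantumInt_mul_sum_quantumVandermondeTerm (hq₀ : q ≠ 0) (hq : ¬IsOfFinOrder q)
    (m n : ℤ) (k : ℕ) :
    quantumInt q (k + 1) * ∑ p ∈ antidiagonal (k + 1), quantumVandermondeTerm q m n p =
      q ^ (-n) * quantumInt q m * ∑ p ∈ antidiagonal k, quantumVandermondeTerm q (m - 1) n p +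
        q ^ m * quantumInt q n * ∑ p ∈ antidiagonal k, quantumVandermondeTerm q m (n - 1) p := by
  have hsplit : ∀ p ∈ antidiagonal (k + 1),
      quantumInt q (k + 1) * quantumVandermondeTerm q m n p =
        q ^ (-(p.2 : ℤ)) * quantumInt q p.1 * quantumVandermondeTerm q m n p +
          q ^ (p.1 : ℤ) * quantumInt q p.2 * quantumVandermondeTerm q m n p := by
    intro p hp
    rw [← add_mul, ← quantumInt_add hq₀, ← Nat.cast_add, mem_antidiagonal.mp hp, Nat.cast_succ]
  rw [mul_sum, sum_congr rfl hsplit, sum_add_distrib, Nat.sum_antidiagonal_succ,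
    Nat.sum_antidiagonal_succ']
  simp only [Nat.cast_zero, Nat.cast_succ, quantumInt_zero, mul_zero, zero_mul, zero_add,
    quantumInt_mul_quantumVandermondeTerm_succ_fst hq₀ hq,
    quantumInt_mul_quantumVandermondeTerm_succ_snd hq₀ hq, mul_sum]

theorem sum_quantumVandermondeTerm (hq₀ : q ≠ 0) (hq : ¬IsOfFinOrder q) (m n : ℤ) (k : ℕ) :
    ∑ p ∈ antidiagonal k, quantumVandermondeTerm q m n p = quantumBinom q (m + n) k := by
  induction k generalizing m n with
  | zero => simp [quantumVandermondeTerm, quantumBinom_zero_right]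
  | succ k ih =>
    apply mul_left_cancel₀ (quantumInt_natCast_add_one_ne_zero hq₀ hq k)
    rw [quantumInt_mul_sum_quantumVandermondeTerm hq₀ hq, ih, ih,
      quantumInt_mul_quantumBinom_succ hq₀ hq, quantumInt_add hq₀, sub_add_eq_add_sub,
      ← add_sub_assoc, add_mul]

theorem quantumBinom_add (hq₀ : q ≠ 0) (hq : ¬IsOfFinOrder q) (m n : ℤ) (k : ℕ) :
    quantumBinom q (m + n) k = ∑ j ∈ range (k + 1),
      q ^ (m * (k - j : ℕ) - n * j) * quantumBinom q m j * quantumBinom q n (k - j) := by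
  rw [← sum_quantumVandermondeTerm hq₀ hq, Nat.sum_antidiagonal_eq_sum_range_succ_mk]
  rfl

theorem quantumBinom_natCast_add (hq₀ : q ≠ 0) (hq : ¬IsOfFinOrder q) (t : ℕ) (n : ℤ) (k : ℕ) :
    quantumBinom q (t + n) k = ∑ c ∈ range (min t k + 1),
      q ^ (t * (k - c : ℕ) - n * c) * quantumBinom q t c * quantumBinom q n (k - c) := by
  have hsub : range (min t k + 1) ⊆ range (k + 1) := range_subset_range.mpr (by omega)
  rw [quantumBinom_add hq₀ hq]
  refine (sum_subset hsub fun c hc hc' => ?_).symm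
  have htc : t < c := by
    rw [mem_range] at hc hc'
    omega
  rw [quantumBinom_eq_zero_of_lt htc, mul_zero, zero_mul]

theorem quantumBinom_mul_quantumBinom (hq₀ : q ≠ 0) (hq : ¬IsOfFinOrder q) (N : ℤ) (t j : ℕ) :
    quantumBinom q N j * quantumBinom q N t = ∑ c ∈ range (min t j + 1),
      q ^ (t * j - N * c) * quantumBinom q N (t + j - c) *
        quantumTrinom q c (t - c) (j - c) := by
  have hN := quantumBinom_natCast_add hq₀ hq t (N - t) j
  rw [add_sub_cancel] at hN
  rw [hN, sum_mul]
  refine sum_congr rfl fun c hc => ?_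
  have hct : c ≤ t ∧ c ≤ j := le_min_iff.mp (mem_range_succ_iff.mp hc)
  obtain ⟨d, rfl⟩ := Nat.exists_eq_add_of_le hct.1
  obtain ⟨s, rfl⟩ := Nat.exists_eq_add_of_le hct.2
  have hidx : c + d + (c + s) - c = c + d + s := by omega
  have hexp : ((c + d : ℕ) : ℤ) * (c + s : ℕ) - N * c =
      (c + d : ℕ) * (s : ℤ) - (N - (c + d : ℕ)) * c := by
    push_cast
    ring
  rw [hidx, hexp, Nat.add_sub_cancel_left, Nat.add_sub_cancel_left,
    mul_assoc _ (quantumBinom q N (c + d + s)), quantumBinom_mul_quantumTrinom hq₀ hq]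
  ring

theorem lemma_3_5_key_general (hq₀ : q ≠ 0) (hq : ¬IsOfFinOrder q) (N m : ℤ) (t l : ℕ) :
    quantumBinom q (N + m) l * quantumBinom q N t =
      ∑ j ∈ range (l + 1), ∑ c ∈ range (min t j + 1),
        q ^ (N * ((l : ℤ) - j - c) + j * (t - m)) *
          quantumBinom q m (l - j) * quantumBinom q N (t + j - c) *
            quantumTrinom q c (t - c) (j - c) := by
  rw [quantumBinom_add hq₀ hq, sum_mul]
  refine sum_congr rfl fun j hj => ?_
  rw [mul_right_comm, mul_assoc _ (quantumBinom q N j), quantumBinom_mul_quantumBinom hq₀ hq,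
    mul_sum, sum_mul]
  refine sum_congr rfl fun c _ => ?_
  have hexp : N * ((l : ℤ) - j - c) + j * (t - m) =
      (N * (l - j : ℕ) - m * j) + (t * j - N * c) := by
    rw [Nat.cast_sub (mem_range_succ_iff.mp hj)]
    ring
  rw [hexp, zpow_add₀ hq₀]
  ring

theorem not_isOfFinOrder_of_transcendental {R A : Type*} [CommRing R] [Nontrivial R] [Ring A]
    [Algebra R A] {x : A} (hx : Transcendental R x) : ¬IsOfFinOrder x := by
  intro h
  obtain ⟨n, hn, hxn⟩ := isOfFinOrder_iff_pow_eq_one.mp h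
  exact hx (IsAlgebraic.of_pow hn (hxn ▸ isAlgebraic_one))

theorem not_isOfFinOrder_ratFuncX : ¬IsOfFinOrder (RatFunc.X : RatFunc F) :=
  not_isOfFinOrder_of_transcendental (RatFunc.transcendental_X (K := F))

theorem v_ne_zero : v ≠ 0 :=
  RatFunc.X_ne_zero

theorem not_isOfFinOrder_v : ¬IsOfFinOrder v :=
  not_isOfFinOrder_ratFuncX

/-- The key identity in the proof of Lemma 3.5:
`[ν-t ∣ λ]·[ν ∣ t] = ∑_{j=0}^{λ} ∑_{c=0}^{min(t,j)}
   v^{ν(λ-j-c)+2jt} [-t ∣ λ-j] [ν ∣ t+j-c] [t+j-c ; c, t-c, j-c]`. -/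
theorem lemma_3_5_key (ν : ℤ) (t lam : ℕ) :
    qbinom (ν - (t : ℤ)) lam * qbinom ν t =
      ∑ j ∈ Finset.range (lam + 1), ∑ c ∈ Finset.range (min t j + 1),
        v ^ (ν * ((lam : ℤ) - (j : ℤ) - (c : ℤ)) + 2 * (j : ℤ) * (t : ℤ)) *
          qbinom (-(t : ℤ)) (lam - j) * qbinom ν (t + j - c) * qtri c (t - c) (j - c) := by
  have hexp (j : ℤ) : 2 * j * t = j * (t - -t) := by ring
  simp only [sub_eq_add_neg ν, hexp]
  exact lemma_3_5_key_general v_ne_zero not_isOfFinOrder_v ν (-t) t lam
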